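/- Let M, K, N be positive integers. For i ∈ {1, 2, 3}, let C₁ : {1,…,M}×{1,…,M} → ℂ^{N×N}, C₂ : {1,…,M}×{1,…,K} → ℂ^{N×N}, and C₃ : {1,…,K}×{1,…,K} → ℂ^{N×N} be fixed families of complex matrices, and for W ∈ ℂ^{N×N} define the real matrices F₁(W) ∈ ℝ^{M×M}, F₂(W) ∈ ℝ^{M×K}, F₃(W) ∈ ℝ^{K×K} entrywise by [F_i(W)]_{m,n} = Re{Tr(W · C_i(m,n))}. Let B₀ ∈ ℂ^{N×N} be Hermitian positive definite and P > 0. Suppose W ∈ ℂ^{N×N} is Hermitian positive semidefinite with t := Re{Tr(W B₀)} satisfying 0 < t < P, F₃(W) is invertible, and S(W) := F₁(W) − F₂(W) F₃(W)⁻¹ F₂(W)ᵀ is symmetric positive definite. Then W′ := (P/t) W is Hermitian positive semidefinite with Re{Tr(W′ B₀)} = P, F₃(W′) is invertible, S(W′) = (P/t) S(W) is positive definite, and Tr{S(W′)⁻¹} = (t/P) Tr{S(W)⁻¹} < Tr{S(W)⁻¹}. -/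

import Mathlib

/-!
Each block `F_i` is real-linear in `W`, so the Schur complement `S` is homogeneous of degree
one (`schurRe_smul`), and `Tr S⁻¹` is homogeneous of degree `-1`. Scaling `W` by `P / t > 1`
therefore multiplies the power by `P / t`, which makes it equal to `P`, and multiplies the
bound by `t / P < 1`. The decrease is strict because the trace of a positive definite matrix
of positive size is positive.
-/

open Matrix
open scoped ComplexOrder

/-- The real matrix with entries `[F(W)]_{m,n} = Re{Tr(W · C(m,n))}` built from a family
of complex matrices `C`. -/
noncomputable def blockRe {N : ℕ} {I J : Type*} (C : I → J → Matrix (Fin N) (Fin N) ℂ)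
    (W : Matrix (Fin N) (Fin N) ℂ) : Matrix I J ℝ :=
  Matrix.of fun m n => (Matrix.trace (W * C m n)).re

/-- The Schur complement `F₁(W) − F₂(W) F₃(W)⁻¹ F₂(W)ᵀ` of the Fisher-information
blocks built from the families `C₁, C₂, C₃`. -/
noncomputable def schurRe {M K N : ℕ} (C₁ : Fin M → Fin M → Matrix (Fin N) (Fin N) ℂ)
    (C₂ : Fin M → Fin K → Matrix (Fin N) (Fin N) ℂ)
    (C₃ : Fin K → Fin K → Matrix (Fin N) (Fin N) ℂ)
    (W : Matrix (Fin N) (Fin N) ℂ) : Matrix (Fin M) (Fin M) ℝ :=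
  blockRe C₁ W - blockRe C₂ W * (blockRe C₃ W)⁻¹ * (blockRe C₂ W)ᵀ

/-- `F` is homogeneous of degree one over the real scalars. -/
lemma blockRe_smul {N : ℕ} {I J : Type*} (C : I → J → Matrix (Fin N) (Fin N) ℂ)
    (W : Matrix (Fin N) (Fin N) ℂ) (c : ℝ) :
    blockRe C ((c : ℂ) • W) = c • blockRe C W := by
  ext m n
  simp [blockRe, Matrix.trace_smul]

lemma inv_smul_of_isUnit_det {n : Type*} [Fintype n] [DecidableEq n] (A : Matrix n n ℝ)
    (hA : IsUnit A.det) {c : ℝ} (hc : c ≠ 0) : (c • A)⁻¹ = c⁻¹ • A⁻¹ := by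
  apply Matrix.inv_eq_right_inv
  rw [Matrix.smul_mul, Matrix.mul_smul, smul_smul, mul_inv_cancel₀ hc, one_smul,
    Matrix.mul_nonsing_inv A hA]

/-- The Schur complement is homogeneous of degree one: in its second term the two factors
`F₂` contribute `c²` and `F₃⁻¹` contributes `c⁻¹`. -/
lemma schurRe_smul {M K N : ℕ} (C₁ : Fin M → Fin M → Matrix (Fin N) (Fin N) ℂ)
    (C₂ : Fin M → Fin K → Matrix (Fin N) (Fin N) ℂ)
    (C₃ : Fin K → Fin K → Matrix (Fin N) (Fin N) ℂ)
    (W : Matrix (Fin N) (Fin N) ℂ) (hF₃ : IsUnit (blockRe C₃ W).det) {c : ℝ} (hc : c ≠ 0) :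
    schurRe C₁ C₂ C₃ ((c : ℂ) • W) = c • schurRe C₁ C₂ C₃ W := by
  simp only [schurRe, blockRe_smul, inv_smul_of_isUnit_det _ hF₃ hc, Matrix.transpose_smul,
    Matrix.smul_mul, Matrix.mul_smul, smul_smul, smul_sub]
  rw [inv_mul_cancel₀ hc, mul_one]

/-- Scaling a feasible `W` up to the power boundary strictly decreases the CRB:
if `W ⪰ 0` with `t = Re{Tr(W B₀)}` satisfying `0 < t < P`, `F₃(W)` invertible, and the
Schur complement `S(W)` symmetric positive definite, then `W′ = (P/t)W` is PSD, meets the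
power budget with equality, has `S(W′) = (P/t) S(W)` positive definite, and
`Tr{S(W′)⁻¹} = (t/P) Tr{S(W)⁻¹} < Tr{S(W)⁻¹}`. -/
theorem stmt_15 {M K N : ℕ} (hM : 0 < M) (hK : 0 < K) (hN : 0 < N)
    (C₁ : Fin M → Fin M → Matrix (Fin N) (Fin N) ℂ)
    (C₂ : Fin M → Fin K → Matrix (Fin N) (Fin N) ℂ)
    (C₃ : Fin K → Fin K → Matrix (Fin N) (Fin N) ℂ)
    (B₀ : Matrix (Fin N) (Fin N) ℂ) (hB₀ : B₀.PosDef)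
    (P : ℝ) (hP : 0 < P)
    (W : Matrix (Fin N) (Fin N) ℂ) (hW : W.PosSemidef)
    (t : ℝ) (ht : t = (Matrix.trace (W * B₀)).re) (ht0 : 0 < t) (htP : t < P)
    (hF₃ : IsUnit (blockRe C₃ W).det)
    (hS : (schurRe C₁ C₂ C₃ W).PosDef) :
    ((((P / t : ℝ) : ℂ) • W).PosSemidef) ∧
    (Matrix.trace ((((P / t : ℝ) : ℂ) • W) * B₀)).re = P ∧
    IsUnit (blockRe C₃ (((P / t : ℝ) : ℂ) • W)).det ∧
    schurRe C₁ C₂ C₃ (((P / t : ℝ) : ℂ) • W) = (P / t) • schurRe C₁ C₂ C₃ W ∧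
    (schurRe C₁ C₂ C₃ (((P / t : ℝ) : ℂ) • W)).PosDef ∧
    (schurRe C₁ C₂ C₃ (((P / t : ℝ) : ℂ) • W))⁻¹.trace =
        (t / P) * (schurRe C₁ C₂ C₃ W)⁻¹.trace ∧
    (schurRe C₁ C₂ C₃ (((P / t : ℝ) : ℂ) • W))⁻¹.trace <
        (schurRe C₁ C₂ C₃ W)⁻¹.trace := by
  have hc : 0 < P / t := div_pos hP ht0
  have hSs := schurRe_smul C₁ C₂ C₃ W hF₃ hc.ne'
  have htr : (schurRe C₁ C₂ C₃ (((P / t : ℝ) : ℂ) • W))⁻¹.trace =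
      (t / P) * (schurRe C₁ C₂ C₃ W)⁻¹.trace := by
    rw [hSs, inv_smul_of_isUnit_det _ hS.det_pos.ne'.isUnit hc.ne', Matrix.trace_smul,
      inv_div, smul_eq_mul]
  -- `0 < M` makes the index type nonempty, without which the trace would vanish.
  have : Nonempty (Fin M) := ⟨⟨0, hM⟩⟩
  have hpos : 0 < (schurRe C₁ C₂ C₃ W)⁻¹.trace := hS.inv.trace_pos
  refine ⟨hW.smul (by exact_mod_cast hc.le), ?_, ?_, hSs, ?_, htr, ?_⟩
  · rw [Matrix.smul_mul, Matrix.trace_smul, smul_eq_mul, Complex.re_ofReal_mul, ← ht,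
      div_mul_cancel₀ _ ht0.ne']
  · rw [blockRe_smul, Matrix.det_smul]
    exact (pow_ne_zero _ hc.ne').isUnit.mul hF₃
  · rw [hSs]
    exact hS.smul hc
  · rw [htr]
    exact mul_lt_of_lt_one_left hpos ((div_lt_one hP).2 htP)
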